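/- There exists a linear form L in S_1 such that Q = L² if and only if D_i = 0 for every i = 1, …, 21. -/

import Mathlib

noncomputable section

/-- The skew-commutation relation `z_j z_i = μ_{ij} z_i z_j` on the free algebra. -/
inductive SkewRel (k : Type*) [Field k] (μ : Fin 4 → Fin 4 → k) :
    FreeAlgebra k (Fin 4) → FreeAlgebra k (Fin 4) → Prop
  | rel (i j : Fin 4) :
      SkewRel k μ (FreeAlgebra.ι k j * FreeAlgebra.ι k i)
        (μ i j • (FreeAlgebra.ι k i * FreeAlgebra.ι k j))

/-- The generators `z_1, …, z_4` of `S = k⟨z_1,…,z_4⟩/(z_j z_i - μ_{ij} z_i z_j)`. -/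
def z (k : Type*) [Field k] (μ : Fin 4 → Fin 4 → k) (i : Fin 4) :
    RingQuot (SkewRel k μ) :=
  RingQuot.mkAlgHom k (SkewRel k μ) (FreeAlgebra.ι k i)

/-!
Comparing coefficients, `Q = L²` holds for `L = ∑ b_i z_i` exactly when
`2 a_{ij} = (1 + μ_{ij}) b_i b_j` for all `i ≤ j`; and the `D_i` are precisely the `2 × 2` minors of
the symmetric matrix with entries `a_{ij} / (1 + μ_{ij})`, with denominators cleared, so their
vanishing is clearly necessary. Conversely, choose `c_i` with `c_i² = a_{ii}`. The principal minors
give `2 a_{ij} = ± (1 + μ_{ij}) c_i c_j`, and only the signs have to be reconciled. View them as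
gains on the edges `i j` where the right-hand side is nonzero: the minors say that closed walks of
length at most four have gain `1`. On four vertices this forces every closed walk to have gain `1`,
so the signs are of the form `e_i e_j`, and `b_i = e_i c_i` works.
-/

section GainGraph

variable {V M : Type*} [Monoid M] {G : SimpleGraph V} (g : V → V → M)

/-- The gain of a walk in a gain graph, the step from `u` to `v` having gain `g u v`: the ordered
product of the gains of its steps. Edge signs are products of vertex signs exactly when all closed
walks have gain `1`. -/
def walkGain : ∀ {u v : V}, G.Walk u v → M
  | _, _, .nil => 1
  | u, _, .cons (v := v) _ p => g u v * walkGain p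

@[simp]
theorem walkGain_nil (u : V) : walkGain g (.nil : G.Walk u u) = 1 := rfl

@[simp]
theorem walkGain_cons {u v w : V} (h : G.Adj u v) (p : G.Walk v w) :
    walkGain g (.cons h p) = g u v * walkGain g p := rfl

@[simp]
theorem walkGain_append {u v w : V} (p : G.Walk u v) (q : G.Walk v w) :
    walkGain g (p.append q) = walkGain g p * walkGain g q := by
  induction p with
  | nil => simp
  | cons h p ih => simp [ih, mul_assoc]

variable {g}

/-- Each loop cut out by `bypass` is an edge followed by a path, so its length is at most `|V|`. -/
theorem walkGain_bypass [Fintype V] [DecidableEq V]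
    (hg : ∀ (v : V) (p : G.Walk v v), p.length ≤ Fintype.card V → walkGain g p = 1)
    {u v : V} (p : G.Walk u v) : walkGain g p.bypass = walkGain g p := by
  induction p with
  | nil => rfl
  | @cons u w v h p ih =>
    rw [walkGain_cons, ← ih, SimpleGraph.Walk.bypass]
    split_ifs with hu
    · have hlen : (SimpleGraph.Walk.cons h (p.bypass.takeUntil u hu)).length ≤ Fintype.card V :=
        Nat.succ_le_of_lt <|
          (p.bypass.length_takeUntil_le_length hu).trans_lt p.bypass_isPath.length_lt
      have hloop := hg u _ hlen
      rw [walkGain_cons] at hloop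
      conv_rhs => rw [← p.bypass.take_spec hu, walkGain_append, ← mul_assoc, hloop, one_mul]
    · rfl

theorem walkGain_eq_one_of_forall_length_le_card [Fintype V]
    (hg : ∀ (v : V) (p : G.Walk v v), p.length ≤ Fintype.card V → walkGain g p = 1)
    {v : V} (p : G.Walk v v) : walkGain g p = 1 := by
  classical
  rw [← walkGain_bypass hg, (SimpleGraph.Walk.isPath_iff_nil.mp p.bypass_isPath).eq_nil,
    walkGain_nil]

theorem walkGain_eq_one_of_length_le_four
    (h₂ : ∀ u v, G.Adj u v → g u v * g v u = 1)
    (h₃ : ∀ u v w, G.Adj u v → G.Adj v w → G.Adj w u → g u v * g v w * g w u = 1)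
    (h₄ : ∀ u v w x, G.Adj u v → G.Adj v w → G.Adj w x → G.Adj x u →
      g u v * g v w * g w x * g x u = 1)
    {v : V} (p : G.Walk v v) (hp : p.length ≤ 4) : walkGain g p = 1 := by
  match p with
  | .nil => rfl
  | .cons e .nil => exact absurd rfl e.ne
  | .cons e₁ (.cons e₂ .nil) => simpa using h₂ _ _ e₁
  | .cons e₁ (.cons e₂ (.cons e₃ .nil)) => simpa [mul_assoc] using h₃ _ _ _ e₁ e₂ e₃
  | .cons e₁ (.cons e₂ (.cons e₃ (.cons e₄ .nil))) =>
    simpa [mul_assoc] using h₄ _ _ _ _ e₁ e₂ e₃ e₄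
  | .cons _ (.cons _ (.cons _ (.cons _ (.cons _ q)))) =>
    simp only [SimpleGraph.Walk.length_cons] at hp
    omega

theorem exists_potential_of_forall_walkGain_eq_one {H : Type*} [Group H] {g : V → V → H}
    (hg : ∀ (v : V) (p : G.Walk v v), walkGain g p = 1) :
    ∃ e : V → H, ∀ u v, G.Adj u v → g u v = (e u)⁻¹ * e v := by
  choose root hroot using fun c : G.ConnectedComponent => c.exists_rep
  have walk (v : V) : G.Walk (root (G.connectedComponentMk v)) v :=
    (SimpleGraph.ConnectedComponent.exact (hroot _)).some
  refine ⟨fun v => walkGain g (walk v), fun u v huv => ?_⟩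
  have hcomp : G.connectedComponentMk v = G.connectedComponentMk u :=
    SimpleGraph.ConnectedComponent.sound huv.symm.reachable
  obtain ⟨p, hp⟩ : ∃ p : G.Walk (root (G.connectedComponentMk u)) v,
      walkGain g p = walkGain g (walk v) := hcomp ▸ ⟨walk v, rfl⟩
  have hclosed := hg _ (((walk u).concat huv).append p.reverse)
  have hback := hg _ (p.append p.reverse)
  rw [walkGain_append, mul_eq_one_iff_eq_inv] at hclosed hback
  calc g u v = (walkGain g (walk u))⁻¹ * walkGain g ((walk u).concat huv) := by
        simp [SimpleGraph.Walk.concat_eq_append]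
    _ = (walkGain g (walk u))⁻¹ * walkGain g (walk v) := by rw [hclosed, ← hback, hp]

theorem exists_potential_of_card_le_four [Fintype V] (hV : Fintype.card V ≤ 4)
    {H : Type*} [Group H] {g : V → V → H}
    (h₂ : ∀ u v, G.Adj u v → g u v * g v u = 1)
    (h₃ : ∀ u v w, G.Adj u v → G.Adj v w → G.Adj w u → g u v * g v w * g w u = 1)
    (h₄ : ∀ u v w x, G.Adj u v → G.Adj v w → G.Adj w x → G.Adj x u →
      g u v * g v w * g w x * g x u = 1) :
    ∃ e : V → H, ∀ u v, G.Adj u v → g u v = (e u)⁻¹ * e v :=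
  exists_potential_of_forall_walkGain_eq_one fun _ =>
    walkGain_eq_one_of_forall_length_le_card fun _ p hp =>
      walkGain_eq_one_of_length_le_four h₂ h₃ h₄ p (hp.trans hV)

end GainGraph

section Minors

theorem exists_rootsOfUnity_mul_eq_of_pow_eq_pow {k : Type*} [Field k] {n : ℕ} [NeZero n] {x y : k}
    (h : x ^ n = y ^ n) : ∃ ζ : rootsOfUnity n k, x = (ζ : kˣ) * y := by
  by_cases hy : y = 0
  · exact ⟨1, by simpa [hy, NeZero.ne n] using h⟩
  · refine ⟨rootsOfUnity.mkOfPowEq (x / y) (by rw [div_pow, h, div_self (pow_ne_zero n hy)]), ?_⟩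
    simp [hy]

theorem rootsOfUnity_two_mul_self {M : Type*} [CommMonoid M] (ζ : rootsOfUnity 2 M) :
    ζ * ζ = 1 := by
  rw [← sq]
  exact Subtype.ext ζ.2

/-- The `2 × 2` minors of the matrix of quotients `r i j / w i j` vanish; this is the rank-one
condition on `r` relative to the weights `w`. Denominators are cleared, so `w` may have zeros. -/
def MinorsVanish {V R : Type*} [Mul R] (w r : V → V → R) : Prop :=
  ∀ i j l m, w i m * w l j * (r i j * r l m) = w i j * w l m * (r i m * r l j)

theorem minorsVanish_of_eq_mul {V R : Type*} [CommRing R] [IsDomain R] {w r : V → V → R} {d : R}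
    (hd : d ≠ 0) {b : V → R}
    (hb : ∀ i j, d * r i j = w i j * (b i * b j)) : MinorsVanish w r := fun i j l m =>
  mul_left_cancel₀ (pow_ne_zero 2 hd) <|
    calc d ^ 2 * (w i m * w l j * (r i j * r l m))
        = w i m * w l j * ((d * r i j) * (d * r l m)) := by ring
      _ = w i j * w l m * ((d * r i m) * (d * r l j)) := by simp only [hb]; ring
      _ = d ^ 2 * (w i j * w l m * (r i m * r l j)) := by ring

/-- Exchanging two rows or two columns negates a minor and transposing preserves it, so one minor
for each unordered pair of 2-subsets is enough: `21` of them when `V` has four elements. -/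
theorem minorsVanish_iff_of_symm {V R : Type*} [LinearOrder V] [CommRing R] {w r : V → V → R}
    (hw : ∀ i j, w i j = w j i) (hr : ∀ i j, r i j = r j i) :
    MinorsVanish w r ↔ ∀ i l, i < l → ∀ j m, j < m → (i < j ∨ i = j ∧ l ≤ m) →
      w i m * w l j * (r i j * r l m) = w i j * w l m * (r i m * r l j) := by
  refine ⟨fun h i l _ j m _ _ => h i j l m, fun h => ?_⟩
  have hsorted (i l) (hil : i < l) (j m) (hjm : j < m) :
      w i m * w l j * (r i j * r l m) = w i j * w l m * (r i m * r l j) := by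
    by_cases hle : i < j ∨ i = j ∧ l ≤ m
    · exact h i l hil j m hjm hle
    · have hle' : j < i ∨ j = i ∧ m ≤ l := by grind
      have := h j m hjm i l hil hle'
      rw [hw i m, hw l j, hw i j, hw l m, hr i m, hr l j, hr i j, hr l m]
      linear_combination this
  intro i j l m
  rcases lt_trichotomy i l with hil | rfl | hil <;> rcases lt_trichotomy j m with hjm | rfl | hjm
  · exact hsorted i l hil j m hjm
  · ring
  · linear_combination -hsorted i l hil m j hjm
  · ring
  · ring
  · ring
  · linear_combination -hsorted l i hil j m hjm
  · ring
  · linear_combination hsorted l i hil m j hjm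

variable {V k : Type*} [Field k]

theorem MinorsVanish.mul_mul_mul_eq_one {q x : V → V → k} (hq : ∀ i j, q i j = q j i)
    (hx : ∀ i j, x i j = x j i) (h : MinorsVanish q x) {s : V → V → rootsOfUnity 2 k}
    (hs : ∀ i j, x i j = (s i j : kˣ) * q i j) {i j l m : V} (hij : q i j ≠ 0) (hjl : q j l ≠ 0)
    (hlm : q l m ≠ 0) (hmi : q m i ≠ 0) : s i j * s j l * s l m * s m i = 1 := by
  have hpairs : s i j * s l m = s j l * s m i := by
    refine Subtype.ext (Units.ext (mul_right_cancel₀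
      (mul_ne_zero (mul_ne_zero hij hlm) (mul_ne_zero hjl hmi)) ?_))
    push_cast
    have hminor := h i j l m
    rw [hq i m, hx i m, hq l j, hx l j, hs i j, hs l m, hs m i, hs j l] at hminor
    linear_combination hminor
  calc s i j * s j l * s l m * s m i = (s i j * s l m) * (s j l * s m i) := by
        rw [mul_right_comm (s i j), mul_assoc]
    _ = 1 := by rw [hpairs, rootsOfUnity_two_mul_self]

theorem exists_switching_of_minorsVanish [Fintype V] (hV : Fintype.card V ≤ 4) {q x : V → V → k}
    (hq : ∀ i j, q i j = q j i) (hx : ∀ i j, x i j = x j i) (h : MinorsVanish q x)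
    (hsq : ∀ i j, x i j ^ 2 = q i j ^ 2) (hdiag : ∀ i, x i i = q i i)
    (hq_left : ∀ i j, q i j ≠ 0 → q i i ≠ 0) :
    ∃ e : V → rootsOfUnity 2 k, ∀ i j, x i j = (e i : kˣ) * (e j : kˣ) * q i j := by
  choose s hs using fun i j => exists_rootsOfUnity_mul_eq_of_pow_eq_pow (hsq i j)
  let G : SimpleGraph V :=
    { Adj := fun i j => i ≠ j ∧ q i j ≠ 0
      symm := ⟨fun i j hij => ⟨hij.1.symm, hq i j ▸ hij.2⟩⟩
      loopless := ⟨fun i hi => hi.1 rfl⟩ }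
  have hloop {i} (hi : q i i ≠ 0) : s i i = 1 :=
    Subtype.ext <| Units.ext <| mul_right_cancel₀ hi <| by simp [← hs, hdiag]
  -- Loops turn the identities for 2- and 3-cycles into instances of the one for 4-walks.
  obtain ⟨e, he⟩ := exists_potential_of_card_le_four (G := G) hV (g := s)
    (fun i j hij => by
      have hi := hq_left i j hij.2
      simpa [hloop hi] using h.mul_mul_mul_eq_one hq hx hs hi hi hij.2 hij.symm.2)
    (fun i j l hij hjl hli => by
      have hi := hq_left i j hij.2
      simpa [hloop hi] using h.mul_mul_mul_eq_one hq hx hs hi hij.2 hjl.2 hli.2)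
    (fun i j l m hij hjl hlm hmi => h.mul_mul_mul_eq_one hq hx hs hij.2 hjl.2 hlm.2 hmi.2)
  refine ⟨e, fun i j => ?_⟩
  by_cases hij : q i j = 0
  · rw [hs, hij, mul_zero, mul_zero]
  · have hsij : s i j = e i * e j := by
      obtain rfl | hne := eq_or_ne i j
      · rw [hloop hij, rootsOfUnity_two_mul_self]
      · rw [he i j ⟨hne, hij⟩, inv_eq_of_mul_eq_one_left (rootsOfUnity_two_mul_self _)]
    rw [hs, hsij, Subgroup.coe_mul, Units.val_mul]

theorem exists_eq_mul_of_minorsVanish [Fintype V] (hV : Fintype.card V ≤ 4) {w r : V → V → k}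
    (hw : ∀ i j, w i j = w j i) (hr : ∀ i j, r i j = r j i) {d : k} (hd : d ≠ 0)
    (hdiag : ∀ i, w i i = d) (hsq : ∀ i, IsSquare (r i i)) (h : MinorsVanish w r) :
    ∃ b : V → k, ∀ i j, d * r i j = w i j * (b i * b j) := by
  choose c hc using hsq
  have hminors : MinorsVanish (fun i j => w i j * (c i * c j)) (fun i j => d * r i j) :=
    fun i j l m => by linear_combination d ^ 2 * (c i * c j * c l * c m) * h i j l m
  have hsquares (i j) : (d * r i j) ^ 2 = (w i j * (c i * c j)) ^ 2 := by
    have := h i j j i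
    simp only [hdiag, hw j i, hr j i, hc] at this
    linear_combination this
  obtain ⟨e, he⟩ := exists_switching_of_minorsVanish hV (fun i j => by rw [hw, mul_comm (c i)])
    (fun i j => by rw [hr]) hminors hsquares (fun i => by rw [hdiag, hc]) (by simp_all)
  refine ⟨fun i => (e i : kˣ) * c i, fun i j => ?_⟩
  rw [he]
  ring

end Minors

section SkewPolynomial

variable {k : Type*} [Field k] {μ : Fin 4 → Fin 4 → k}

theorem z_mul_z (i j : Fin 4) : z k μ j * z k μ i = μ i j • (z k μ i * z k μ j) := by
  simpa only [z, map_mul, map_smul] using RingQuot.mkAlgHom_rel k (SkewRel.rel (μ := μ) i j)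

theorem exists_linearMap_z_mul_z {c : Fin 4 → Fin 4 → k} (hc : ∀ i j, c j i = μ i j * c i j) :
    ∃ f : RingQuot (SkewRel k μ) →ₗ[k] k, ∀ i j, f (z k μ i * z k μ j) = c i j := by
  -- A module graded in degrees `0, 1, 2`, where `z_i z_j` maps degree `0` to degree `2` by `c i j`.
  let T (i : Fin 4) : Module.End k (k × (Fin 4 → k) × k) :=
    { toFun := fun x => (0, Pi.single i x.1, c i ⬝ᵥ x.2.1)
      map_add' := fun x y => by simp [Pi.single_add]
      map_smul' := fun a x => by simp [← Pi.single_smul] }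
  have hT (i j x) : (T i * T j) x = (0, 0, c i j * x.1) := by simp [T]
  let φ : RingQuot (SkewRel k μ) →ₐ[k] Module.End k (k × (Fin 4 → k) × k) :=
    RingQuot.liftAlgHom k ⟨FreeAlgebra.lift k T, by
      rintro _ _ ⟨i, j⟩
      refine LinearMap.ext fun x => ?_
      simp only [map_mul, map_smul, FreeAlgebra.lift_ι_apply, LinearMap.smul_apply, hT, hc i j]
      simp [mul_assoc]⟩
  have hφ (i) : φ (z k μ i) = T i := by simp [φ, z]
  exact ⟨LinearMap.snd k _ k ∘ₗ LinearMap.snd k k _ ∘ₗ LinearMap.applyₗ (1, 0, 0) ∘ₗ φ.toLinearMap,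
    fun i j => by simp [hφ, hT, -Module.End.mul_apply]⟩

variable (μ) in
/-- The element `∑ P i j z_i z_j` of `S_2`. Every quadratic form is of this shape, but `P` is not
unique because `z_j z_i = μ i j z_i z_j`. -/
def quadForm (P : Fin 4 → Fin 4 → k) : RingQuot (SkewRel k μ) :=
  ∑ i, ∑ j, P i j • (z k μ i * z k μ j)

theorem sq_sum_smul_z (b : Fin 4 → k) :
    (∑ i, b i • z k μ i) ^ 2 = quadForm μ (fun i j => b i * b j) := by
  simp only [quadForm, sq, Finset.sum_mul_sum, smul_mul_smul_comm]

theorem two_smul_quadForm (P : Fin 4 → Fin 4 → k) :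
    (2 : k) • quadForm μ P = quadForm μ fun i j => P i j + μ i j * P j i := by
  have hswap : quadForm μ P = quadForm μ fun i j => μ i j * P j i := by
    rw [quadForm, Finset.sum_comm]
    refine Finset.sum_congr rfl fun i _ => Finset.sum_congr rfl fun j _ => ?_
    rw [z_mul_z, smul_smul, mul_comm]
  rw [two_smul]
  nth_rewrite 2 [hswap]
  simp only [quadForm, add_smul, Finset.sum_add_distrib]

theorem quadForm_eq_iff (h2 : (2 : k) ≠ 0) (hμ : ∀ i j, μ i j * μ j i = 1)
    (P R : Fin 4 → Fin 4 → k) :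
    quadForm μ P = quadForm μ R ↔ ∀ i j, P i j + μ i j * P j i = R i j + μ i j * R j i := by
  constructor
  · intro h a b
    obtain ⟨f, hf⟩ := exists_linearMap_z_mul_z (μ := μ)
      (c := fun i j => (if i = a then if j = b then 1 else 0 else 0) +
        if i = b then if j = a then μ a b else 0 else 0) (by grind)
    simpa [quadForm, hf, mul_add, Finset.sum_add_distrib, mul_comm (μ a b)] using congrArg f h
  · intro h
    apply smul_right_injective _ h2
    simp only [two_smul_quadForm, h]

theorem exists_quadForm_eq_sq_iff (h2 : (2 : k) ≠ 0) (hμ : ∀ i j, μ i j * μ j i = 1)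
    (P : Fin 4 → Fin 4 → k) :
    (∃ L ∈ Submodule.span k (Set.range (z k μ)), quadForm μ P = L ^ 2) ↔
      ∃ b : Fin 4 → k, ∀ i j, P i j + μ i j * P j i = (1 + μ i j) * (b i * b j) := by
  simp only [Submodule.mem_span_range_iff_exists_fun, exists_exists_eq_and, sq_sum_smul_z,
    quadForm_eq_iff h2 hμ, one_add_mul]
  simp only [mul_comm]

/-- The coefficients of `∑ i, a i i z_i² + ∑ i < j, 2 a i j z_i z_j`, the shape in which `Q` is
given. Entries of `a` below the diagonal are ignored. -/
def orderedCoeff (a : Fin 4 → Fin 4 → k) (i j : Fin 4) : k :=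
  if i < j then 2 * a i j else if i = j then a i i else 0

theorem quadForm_orderedCoeff (a : Fin 4 → Fin 4 → k) :
    quadForm μ (orderedCoeff a) =
      a 0 0 • (z k μ 0 * z k μ 0) + a 1 1 • (z k μ 1 * z k μ 1) +
      a 2 2 • (z k μ 2 * z k μ 2) + a 3 3 • (z k μ 3 * z k μ 3) +
      (2 * a 0 1) • (z k μ 0 * z k μ 1) + (2 * a 0 2) • (z k μ 0 * z k μ 2) +
      (2 * a 0 3) • (z k μ 0 * z k μ 3) + (2 * a 1 2) • (z k μ 1 * z k μ 2) +
      (2 * a 1 3) • (z k μ 1 * z k μ 3) + (2 * a 2 3) • (z k μ 2 * z k μ 3) := by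
  simp only [quadForm, orderedCoeff, Fin.sum_univ_four, Fin.reduceLT, Fin.reduceEq, if_true,
    if_false, zero_smul]
  abel

/-- The symmetric matrix with the same entries as `a` on and above the diagonal, used to treat `a`
and `μ` symmetrically; entries of `a` below the diagonal are ignored. -/
def symmUpper {V α : Type*} [LinearOrder V] (a : V → V → α) (i j : V) : α := a (min i j) (max i j)

theorem symmUpper_comm {V α : Type*} [LinearOrder V] (a : V → V → α) (i j : V) :
    symmUpper a i j = symmUpper a j i := by
  rw [symmUpper, symmUpper, min_comm, max_comm]

theorem orderedCoeff_add_mul_eq_iff (hμdiag : ∀ i, μ i i = 1) (hμ : ∀ i j, μ i j * μ j i = 1)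
    (a : Fin 4 → Fin 4 → k) (i j : Fin 4) (x : k) :
    orderedCoeff a i j + μ i j * orderedCoeff a j i = (1 + μ i j) * x ↔
      2 * symmUpper a i j = (1 + symmUpper μ i j) * x := by
  rcases lt_trichotomy i j with hij | rfl | hij
  · simp [orderedCoeff, symmUpper, hij, hij.le, hij.not_gt, hij.ne']
  · simp [orderedCoeff, symmUpper, hμdiag, two_mul]
  · have hflip : 1 + μ i j = μ i j * (1 + μ j i) := by linear_combination -hμ i j
    have hne : μ i j ≠ 0 := left_ne_zero_of_mul_eq_one (hμ i j)
    simp [orderedCoeff, symmUpper, hij, hij.le, hij.not_gt, hij.ne', hflip, mul_assoc, hne]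

theorem exists_quadForm_orderedCoeff_eq_sq_iff (h2 : (2 : k) ≠ 0) (hμdiag : ∀ i, μ i i = 1)
    (hμ : ∀ i j, μ i j * μ j i = 1) (a : Fin 4 → Fin 4 → k) :
    (∃ L ∈ Submodule.span k (Set.range (z k μ)), quadForm μ (orderedCoeff a) = L ^ 2) ↔
      (∀ i, IsSquare (a i i)) ∧ MinorsVanish (fun i j => 1 + symmUpper μ i j) (symmUpper a) := by
  have hdiag (i) : 1 + symmUpper μ i i = 2 := by simp [symmUpper, hμdiag, one_add_one_eq_two]
  have hsymm (i) : symmUpper a i i = a i i := by simp [symmUpper]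
  simp only [exists_quadForm_eq_sq_iff h2 hμ, orderedCoeff_add_mul_eq_iff hμdiag hμ]
  constructor
  · rintro ⟨b, hb⟩
    refine ⟨fun i => ⟨b i, mul_left_cancel₀ h2 ?_⟩, minorsVanish_of_eq_mul h2 hb⟩
    simpa only [hdiag, hsymm] using hb i i
  · rintro ⟨hsq, hminors⟩
    exact exists_eq_mul_of_minorsVanish (by simp) (fun i j => by rw [symmUpper_comm μ])
      (symmUpper_comm a) h2 hdiag (by simpa only [hsymm] using hsq) hminors

theorem minorsVanish_symmUpper_iff (hμdiag : ∀ i, μ i i = 1) (a : Fin 4 → Fin 4 → k) :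
    MinorsVanish (fun i j => 1 + symmUpper μ i j) (symmUpper a) ↔
    4 * a 0 1 ^ 2 - (1 + μ 0 1) ^ 2 * a 0 0 * a 1 1 = 0 ∧
    4 * a 0 2 ^ 2 - (1 + μ 0 2) ^ 2 * a 0 0 * a 2 2 = 0 ∧
    4 * a 0 3 ^ 2 - (1 + μ 0 3) ^ 2 * a 0 0 * a 3 3 = 0 ∧
    4 * a 1 2 ^ 2 - (1 + μ 1 2) ^ 2 * a 1 1 * a 2 2 = 0 ∧
    4 * a 1 3 ^ 2 - (1 + μ 1 3) ^ 2 * a 1 1 * a 3 3 = 0 ∧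
    4 * a 2 3 ^ 2 - (1 + μ 2 3) ^ 2 * a 2 2 * a 3 3 = 0 ∧
    2 * (1 + μ 1 2) * a 0 1 * a 0 2 - (1 + μ 0 1) * (1 + μ 0 2) * a 0 0 * a 1 2 = 0 ∧
    2 * (1 + μ 1 3) * a 0 1 * a 0 3 - (1 + μ 0 1) * (1 + μ 0 3) * a 0 0 * a 1 3 = 0 ∧
    2 * (1 + μ 0 2) * a 0 1 * a 1 2 - (1 + μ 0 1) * (1 + μ 1 2) * a 0 2 * a 1 1 = 0 ∧
    2 * (1 + μ 0 3) * a 0 1 * a 1 3 - (1 + μ 0 1) * (1 + μ 1 3) * a 0 3 * a 1 1 = 0 ∧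
    2 * (1 + μ 2 3) * a 0 2 * a 0 3 - (1 + μ 0 2) * (1 + μ 0 3) * a 0 0 * a 2 3 = 0 ∧
    2 * (1 + μ 0 1) * a 0 2 * a 1 2 - (1 + μ 0 2) * (1 + μ 1 2) * a 2 2 * a 0 1 = 0 ∧
    2 * (1 + μ 0 3) * a 0 2 * a 2 3 - (1 + μ 0 2) * (1 + μ 2 3) * a 2 2 * a 0 3 = 0 ∧
    2 * (1 + μ 0 1) * a 0 3 * a 1 3 - (1 + μ 0 3) * (1 + μ 1 3) * a 0 1 * a 3 3 = 0 ∧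
    2 * (1 + μ 0 2) * a 0 3 * a 2 3 - (1 + μ 0 3) * (1 + μ 2 3) * a 0 2 * a 3 3 = 0 ∧
    2 * (1 + μ 2 3) * a 1 2 * a 1 3 - (1 + μ 1 2) * (1 + μ 1 3) * a 1 1 * a 2 3 = 0 ∧
    2 * (1 + μ 1 3) * a 1 2 * a 2 3 - (1 + μ 1 2) * (1 + μ 2 3) * a 2 2 * a 1 3 = 0 ∧
    2 * (1 + μ 1 2) * a 1 3 * a 2 3 - (1 + μ 1 3) * (1 + μ 2 3) * a 1 2 * a 3 3 = 0 ∧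
    (1 + μ 0 2) * (1 + μ 1 3) * a 0 1 * a 2 3 - (1 + μ 0 1) * (1 + μ 2 3) * a 0 2 * a 1 3 = 0 ∧
    (1 + μ 0 3) * (1 + μ 1 2) * a 0 2 * a 1 3 - (1 + μ 0 2) * (1 + μ 1 3) * a 0 3 * a 1 2 = 0 ∧
    (1 + μ 0 1) * (1 + μ 2 3) * a 0 3 * a 1 2 - (1 + μ 0 3) * (1 + μ 1 2) * a 0 1 * a 2 3 = 0 := by
  rw [minorsVanish_iff_of_symm (fun i j => by rw [symmUpper_comm μ]) (symmUpper_comm a)]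
  simp only [symmUpper, Fin.forall_fin_succ, Fin.isValue, not_lt_zero, nonpos_iff_eq_zero, zero_le,
    inf_of_le_right, sup_of_le_left, IsEmpty.forall_iff, Fin.succ_zero_eq_one, Fin.lt_one_iff,
    Nat.reduceAdd, Fin.succ_one_eq_two, Fin.reduceSucc, and_true, true_and, false_or, and_imp,
    forall_const, Fin.reduceLT, Fin.succ_ne_zero, lt_self_iff_false, implies_true, and_self,
    and_assoc, hμdiag, inf_of_le_left, sup_of_le_right, Std.le_refl, Fin.reduceLE, and_false,
    or_false, zero_ne_one, Fin.reduceEq, or_true, or_self]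
  constructor
  · rintro ⟨D1, D7, D8, D9, D10, D20, D2, D11, D12, D21, D13, D3, D19, D14,
      D15, D4, D16, D17, D5, D18, D6⟩
    exact ⟨by linear_combination -D1, by linear_combination -D2, by linear_combination -D3,
      by linear_combination -D4, by linear_combination -D5, by linear_combination -D6,
      by linear_combination -D7, by linear_combination -D8, by linear_combination D9,
      by linear_combination D10, by linear_combination -D11, by linear_combination -D12,
      by linear_combination D13, by linear_combination -D14, by linear_combination -D15,
      by linear_combination -D16, by linear_combination D17, by linear_combination -D18,
      by linear_combination D19, by linear_combination D20, by linear_combination -D21⟩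
  · rintro ⟨D1, D2, D3, D4, D5, D6, D7, D8, D9, D10, D11, D12, D13, D14,
      D15, D16, D17, D18, D19, D20, D21⟩
    exact ⟨by linear_combination -D1, by linear_combination -D7, by linear_combination -D8,
      by linear_combination D9, by linear_combination D10, by linear_combination D20,
      by linear_combination -D2, by linear_combination -D11, by linear_combination -D12,
      by linear_combination -D21, by linear_combination D13, by linear_combination -D3,
      by linear_combination D19, by linear_combination -D14, by linear_combination -D15,
      by linear_combination -D4, by linear_combination -D16, by linear_combination D17,
      by linear_combination -D5, by linear_combination -D18, by linear_combination -D6⟩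

end SkewPolynomial

theorem stmt0_general (k : Type*) [Field k] (h2 : (2 : k) ≠ 0)
    (μ : Fin 4 → Fin 4 → k) (hμdiag : ∀ i, μ i i = 1)
    (hμ : ∀ i j, μ i j * μ j i = 1)
    (a11 a22 a33 a44 a12 a13 a14 a23 a24 a34 : k) :
    (∃ L ∈ (Submodule.span k ({z k μ 0, z k μ 1, z k μ 2, z k μ 3} : Set (RingQuot (SkewRel k μ)))),
        (a11 • (z k μ 0 * z k μ 0) + a22 • (z k μ 1 * z k μ 1) +
      a33 • (z k μ 2 * z k μ 2) + a44 • (z k μ 3 * z k μ 3) +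
      (2 * a12) • (z k μ 0 * z k μ 1) + (2 * a13) • (z k μ 0 * z k μ 2) +
      (2 * a14) • (z k μ 0 * z k μ 3) + (2 * a23) • (z k μ 1 * z k μ 2) +
      (2 * a24) • (z k μ 1 * z k μ 3) + (2 * a34) • (z k μ 2 * z k μ 3)) = L ^ 2) ↔
      (IsSquare a11 ∧ IsSquare a22 ∧ IsSquare a33 ∧ IsSquare a44) ∧
      (4 * a12 ^ 2 - (1 + μ 0 1) ^ 2 * a11 * a22 = 0 ∧
      4 * a13 ^ 2 - (1 + μ 0 2) ^ 2 * a11 * a33 = 0 ∧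
      4 * a14 ^ 2 - (1 + μ 0 3) ^ 2 * a11 * a44 = 0 ∧
      4 * a23 ^ 2 - (1 + μ 1 2) ^ 2 * a22 * a33 = 0 ∧
      4 * a24 ^ 2 - (1 + μ 1 3) ^ 2 * a22 * a44 = 0 ∧
      4 * a34 ^ 2 - (1 + μ 2 3) ^ 2 * a33 * a44 = 0 ∧
      2 * (1 + μ 1 2) * a12 * a13 - (1 + μ 0 1) * (1 + μ 0 2) * a11 * a23 = 0 ∧
      2 * (1 + μ 1 3) * a12 * a14 - (1 + μ 0 1) * (1 + μ 0 3) * a11 * a24 = 0 ∧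
      2 * (1 + μ 0 2) * a12 * a23 - (1 + μ 0 1) * (1 + μ 1 2) * a13 * a22 = 0 ∧
      2 * (1 + μ 0 3) * a12 * a24 - (1 + μ 0 1) * (1 + μ 1 3) * a14 * a22 = 0 ∧
      2 * (1 + μ 2 3) * a13 * a14 - (1 + μ 0 2) * (1 + μ 0 3) * a11 * a34 = 0 ∧
      2 * (1 + μ 0 1) * a13 * a23 - (1 + μ 0 2) * (1 + μ 1 2) * a33 * a12 = 0 ∧
      2 * (1 + μ 0 3) * a13 * a34 - (1 + μ 0 2) * (1 + μ 2 3) * a33 * a14 = 0 ∧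
      2 * (1 + μ 0 1) * a14 * a24 - (1 + μ 0 3) * (1 + μ 1 3) * a12 * a44 = 0 ∧
      2 * (1 + μ 0 2) * a14 * a34 - (1 + μ 0 3) * (1 + μ 2 3) * a13 * a44 = 0 ∧
      2 * (1 + μ 2 3) * a23 * a24 - (1 + μ 1 2) * (1 + μ 1 3) * a22 * a34 = 0 ∧
      2 * (1 + μ 1 3) * a23 * a34 - (1 + μ 1 2) * (1 + μ 2 3) * a33 * a24 = 0 ∧
      2 * (1 + μ 1 2) * a24 * a34 - (1 + μ 1 3) * (1 + μ 2 3) * a23 * a44 = 0 ∧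
      (1 + μ 0 2) * (1 + μ 1 3) * a12 * a34 - (1 + μ 0 1) * (1 + μ 2 3) * a13 * a24 = 0 ∧
      (1 + μ 0 3) * (1 + μ 1 2) * a13 * a24 - (1 + μ 0 2) * (1 + μ 1 3) * a14 * a23 = 0 ∧
      (1 + μ 0 1) * (1 + μ 2 3) * a14 * a23 - (1 + μ 0 3) * (1 + μ 1 2) * a12 * a34 = 0) := by
  let a : Fin 4 → Fin 4 → k :=
    ![![a11, a12, a13, a14], ![0, a22, a23, a24], ![0, 0, a33, a34], ![0, 0, 0, a44]]
  have hspan : ({z k μ 0, z k μ 1, z k μ 2, z k μ 3} : Set _) = Set.range (z k μ) := by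
    ext; simp [Fin.exists_fin_succ, eq_comm]
  have hdiag : (∀ i, IsSquare (a i i)) ↔
      IsSquare a11 ∧ IsSquare a22 ∧ IsSquare a33 ∧ IsSquare a44 := by
    simp [Fin.forall_fin_succ, a]
  rw [hspan, ← hdiag]
  exact (quadForm_orderedCoeff (μ := μ) a ▸
    exists_quadForm_orderedCoeff_eq_sq_iff h2 hμdiag hμ a).trans
      (and_congr_right' (minorsVanish_symmUpper_iff hμdiag a))

theorem stmt0 (k : Type*) [Field k] [IsAlgClosed k] (h2 : (2 : k) ≠ 0)
    (μ : Fin 4 → Fin 4 → k) (hμdiag : ∀ i, μ i i = 1)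
    (hμ : ∀ i j, μ i j * μ j i = 1)
    (a11 a22 a33 a44 a12 a13 a14 a23 a24 a34 : k) :
    (∃ L ∈ (Submodule.span k ({z k μ 0, z k μ 1, z k μ 2, z k μ 3} : Set (RingQuot (SkewRel k μ)))),
        (a11 • (z k μ 0 * z k μ 0) + a22 • (z k μ 1 * z k μ 1) +
      a33 • (z k μ 2 * z k μ 2) + a44 • (z k μ 3 * z k μ 3) +
      (2 * a12) • (z k μ 0 * z k μ 1) + (2 * a13) • (z k μ 0 * z k μ 2) +
      (2 * a14) • (z k μ 0 * z k μ 3) + (2 * a23) • (z k μ 1 * z k μ 2) +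
      (2 * a24) • (z k μ 1 * z k μ 3) + (2 * a34) • (z k μ 2 * z k μ 3)) = L ^ 2) ↔
      (4 * a12 ^ 2 - (1 + μ 0 1) ^ 2 * a11 * a22 = 0 ∧
      4 * a13 ^ 2 - (1 + μ 0 2) ^ 2 * a11 * a33 = 0 ∧
      4 * a14 ^ 2 - (1 + μ 0 3) ^ 2 * a11 * a44 = 0 ∧
      4 * a23 ^ 2 - (1 + μ 1 2) ^ 2 * a22 * a33 = 0 ∧
      4 * a24 ^ 2 - (1 + μ 1 3) ^ 2 * a22 * a44 = 0 ∧
      4 * a34 ^ 2 - (1 + μ 2 3) ^ 2 * a33 * a44 = 0 ∧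
      2 * (1 + μ 1 2) * a12 * a13 - (1 + μ 0 1) * (1 + μ 0 2) * a11 * a23 = 0 ∧
      2 * (1 + μ 1 3) * a12 * a14 - (1 + μ 0 1) * (1 + μ 0 3) * a11 * a24 = 0 ∧
      2 * (1 + μ 0 2) * a12 * a23 - (1 + μ 0 1) * (1 + μ 1 2) * a13 * a22 = 0 ∧
      2 * (1 + μ 0 3) * a12 * a24 - (1 + μ 0 1) * (1 + μ 1 3) * a14 * a22 = 0 ∧
      2 * (1 + μ 2 3) * a13 * a14 - (1 + μ 0 2) * (1 + μ 0 3) * a11 * a34 = 0 ∧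
      2 * (1 + μ 0 1) * a13 * a23 - (1 + μ 0 2) * (1 + μ 1 2) * a33 * a12 = 0 ∧
      2 * (1 + μ 0 3) * a13 * a34 - (1 + μ 0 2) * (1 + μ 2 3) * a33 * a14 = 0 ∧
      2 * (1 + μ 0 1) * a14 * a24 - (1 + μ 0 3) * (1 + μ 1 3) * a12 * a44 = 0 ∧
      2 * (1 + μ 0 2) * a14 * a34 - (1 + μ 0 3) * (1 + μ 2 3) * a13 * a44 = 0 ∧
      2 * (1 + μ 2 3) * a23 * a24 - (1 + μ 1 2) * (1 + μ 1 3) * a22 * a34 = 0 ∧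
      2 * (1 + μ 1 3) * a23 * a34 - (1 + μ 1 2) * (1 + μ 2 3) * a33 * a24 = 0 ∧
      2 * (1 + μ 1 2) * a24 * a34 - (1 + μ 1 3) * (1 + μ 2 3) * a23 * a44 = 0 ∧
      (1 + μ 0 2) * (1 + μ 1 3) * a12 * a34 - (1 + μ 0 1) * (1 + μ 2 3) * a13 * a24 = 0 ∧
      (1 + μ 0 3) * (1 + μ 1 2) * a13 * a24 - (1 + μ 0 2) * (1 + μ 1 3) * a14 * a23 = 0 ∧
      (1 + μ 0 1) * (1 + μ 2 3) * a14 * a23 - (1 + μ 0 3) * (1 + μ 1 2) * a12 * a34 = 0) := by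
  have hsq (x : k) : IsSquare x := IsAlgClosed.exists_eq_mul_self x
  exact (stmt0_general k h2 μ hμdiag hμ a11 a22 a33 a44 a12 a13 a14 a23 a24 a34).trans <|
    and_iff_right ⟨hsq a11, hsq a22, hsq a33, hsq a44⟩
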